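/- arXiv:2308.11616 — 2 statements merged into one kernel-verified Lean document; each statement's English description precedes it below -/
import Mathlib

section
/- Let s₁,…,sₙ ∈ M_{2ⁿ}(ℂ) be pairwise commuting Hermitian involutions with Tr(∏_{i∈A} sᵢ) = 0 for every nonempty A ⊆ {1,…,n}, let ψ ∈ ℂ^{2ⁿ} be a unit vector with sᵢψ = ψ for all i, and let d₁,…,dₙ ∈ M_{2ⁿ}(ℂ) be unitary matrices satisfying dᵢsᵢ = −sᵢdᵢ and dᵢsⱼ = sⱼdᵢ for all j ≠ i. Then the 2ⁿ vectors { (∏ᵢ₌₁ⁿ dᵢ^{bᵢ}) ψ : b ∈ {0,1}ⁿ } (product taken in order of increasing i) form an orthonormal basis of ℂ^{2ⁿ}. -/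
open Matrix

/-!
Write `P b` for the ordered product of the `d i` with `b i = true`. Moving `s j` past `P b` costs one
sign for each factor `d j`, so `s j * P b = ± P b * s j`, with sign `-1` exactly when `b j = true`
(`mul_ofFn_prod`, `mulVec_prod_eq`). As `s j` fixes `ψ`, the vector `P b ψ` is an eigenvector of every
`s j`, with eigenvalue `-1` or `1` according to `b j`. Two distinct bit strings differ at some `j`,
and eigenvectors of the Hermitian matrix `s j` for distinct real eigenvalues are orthogonal; each
`P b` is unitary, so all the vectors have norm one. Finally `2 ^ n` orthonormal vectors in a space of
dimension `2 ^ n` span it.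
-/

/-- If `x` commutes with each `f i` up to the scalar `c i`, then it commutes with the ordered product
of the `f i` up to the product of these scalars. -/
theorem mul_ofFn_prod {N : Type*} [Fintype N] [DecidableEq N] {n : ℕ} (x : Matrix N N ℂ)
    (f : Fin n → Matrix N N ℂ) (c : Fin n → ℂ) (h : ∀ i, x * f i = c i • (f i * x)) :
    x * (List.ofFn f).prod = (∏ i, c i) • ((List.ofFn f).prod * x) := by
  induction n with
  | zero => simp
  | succ n ih =>
    rw [List.ofFn_succ, List.prod_cons, Fin.prod_univ_succ, ← mul_assoc, h, smul_mul_assoc,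
      mul_assoc, ih (fun i => f i.succ) (fun i => c i.succ) (fun i => h i.succ), mul_smul_comm,
      smul_smul, mul_assoc]

/-- The vector labelled by `b` is an eigenvector of `s j`, with eigenvalue determined by `b j`. -/
theorem mulVec_prod_eq {N : Type*} [Fintype N] [DecidableEq N] {n : ℕ}
    (s d : Fin n → Matrix N N ℂ) (ψ : N → ℂ)
    (hstab : ∀ i, (s i).mulVec ψ = ψ)
    (hanti : ∀ i, d i * s i = -(s i * d i))
    (hcommds : ∀ i j, i ≠ j → d i * s j = s j * d i) (b : Fin n → Bool) (j : Fin n) :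
    (s j).mulVec ((List.ofFn (fun i => if b i then d i else 1)).prod.mulVec ψ) =
      (if b j then -1 else 1 : ℂ) •
        (List.ofFn (fun i => if b i then d i else 1)).prod.mulVec ψ := by
  have h := mul_ofFn_prod (s j) (fun i => if b i then d i else 1)
    (fun i => if i = j then (if b j then -1 else 1) else 1) (by
      intro i
      by_cases hij : i = j
      · subst hij
        by_cases hb : b i <;> simp [hb, hanti]
      · by_cases hb : b i <;> simp [hb, hij, hcommds i j hij])
  rw [Finset.prod_ite_eq' Finset.univ j, if_pos (Finset.mem_univ j)] at h
  rw [mulVec_mulVec, h, smul_mulVec, ← mulVec_mulVec, hstab]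

/-- Eigenvectors of a Hermitian matrix for the eigenvalues `1` and `-1` are orthogonal; the signs are
indexed by Booleans. -/
theorem dotProduct_eq_zero_of_sign_ne {N : Type*} [Fintype N] (S : Matrix N N ℂ) (hS : Sᴴ = S)
    (v w : N → ℂ) (p q : Bool) (hpq : p ≠ q)
    (hv : S.mulVec v = (if p then -1 else 1 : ℂ) • v)
    (hw : S.mulVec w = (if q then -1 else 1 : ℂ) • w) : star v ⬝ᵥ w = 0 := by
  have h : star v ⬝ᵥ S.mulVec w = star (S.mulVec v) ⬝ᵥ w := by
    rw [star_mulVec, hS, dotProduct_mulVec]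
  rw [hv, hw] at h
  cases p <;> cases q <;> simp at h hpq ⊢
  · exact self_eq_neg.mp h.symm
  · exact self_eq_neg.mp h

theorem ofFn_prod_mem_unitaryGroup {N : Type*} [Fintype N] [DecidableEq N] {n : ℕ}
    (d : Fin n → Matrix N N ℂ) (hdunit : ∀ i, (d i)ᴴ * d i = 1) (b : Fin n → Bool) :
    (List.ofFn (fun i => if b i then d i else 1)).prod ∈ unitaryGroup N ℂ := by
  refine Submonoid.list_prod_mem _ fun x hx => ?_
  obtain ⟨i, rfl⟩ := List.mem_ofFn.mp hx
  by_cases hb : b i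
  · simpa [hb, mem_unitaryGroup_iff', star_eq_conjTranspose] using hdunit i
  · simp [hb, one_mem]

/-- An orthonormal family indexed by a type of cardinality `card N` spans `ℂ^N`. -/
theorem span_eq_top_of_orthonormal {N ι : Type*} [Fintype N] [Fintype ι] [DecidableEq ι]
    (hcard : Fintype.card ι = Fintype.card N) (v : ι → N → ℂ)
    (hv : ∀ b b', star (v b) ⬝ᵥ v b' = if b = b' then 1 else 0) :
    Submodule.span ℂ (Set.range v) = ⊤ := by
  have hli : LinearIndependent ℂ v := by
    rw [Fintype.linearIndependent_iff]
    intro g hg b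
    have := congrArg (fun w => star (v b) ⬝ᵥ w) hg
    simpa [dotProduct_sum, dotProduct_smul, hv] using this
  exact hli.span_eq_top_of_card_eq_finrank' (by simpa using hcard)

/-- Let `s 1, …, s n ∈ M_{2^n}(ℂ)` be pairwise commuting Hermitian involutions with
`Tr (∏ i in A, s i) = 0` for every nonempty `A`, let `ψ` be a unit vector with `s i ψ = ψ`
for all `i`, and let `d 1, …, d n` be unitaries with `d i s i = - s i d i` and
`d i s j = s j d i` for `j ≠ i`.  Then the `2^n` vectors `(∏ i, (d i)^(b i)) ψ`
(`b ∈ {0,1}^n`, product in order of increasing `i`) form an orthonormal basis of `ℂ^{2^n}`: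
they are pairwise orthonormal and they span the whole space. -/
theorem stmt2 {n : ℕ} (s d : Fin n → Matrix (Fin (2 ^ n)) (Fin (2 ^ n)) ℂ)
    (hscomm : ∀ i j, s i * s j = s j * s i)
    (hsherm : ∀ i, (s i)ᴴ = s i)
    (hsinv : ∀ i, s i * s i = 1)
    (htr : ∀ A : Finset (Fin n), A.Nonempty →
      (List.ofFn (fun i => if i ∈ A then s i else 1)).prod.trace = 0)
    (ψ : Fin (2 ^ n) → ℂ) (hψ : star ψ ⬝ᵥ ψ = 1)
    (hstab : ∀ i, (s i).mulVec ψ = ψ)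
    (hdunit : ∀ i, (d i)ᴴ * d i = 1)
    (hanti : ∀ i, d i * s i = -(s i * d i))
    (hcommds : ∀ i j, i ≠ j → d i * s j = s j * d i) :
    (∀ b b' : Fin n → Bool,
      star ((List.ofFn (fun i => if b i then d i else 1)).prod.mulVec ψ) ⬝ᵥ
          ((List.ofFn (fun i => if b' i then d i else 1)).prod.mulVec ψ) =
        if b = b' then 1 else 0) ∧
    Submodule.span ℂ (Set.range (fun b : Fin n → Bool =>
      (List.ofFn (fun i => if b i then d i else 1)).prod.mulVec ψ)) = ⊤ := by
  have horth : ∀ b b' : Fin n → Bool,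
      star ((List.ofFn (fun i => if b i then d i else 1)).prod.mulVec ψ) ⬝ᵥ
          ((List.ofFn (fun i => if b' i then d i else 1)).prod.mulVec ψ) =
        if b = b' then 1 else 0 := by
    intro b b'
    split_ifs with hbb
    · subst hbb
      have hU := mem_unitaryGroup_iff'.mp (ofFn_prod_mem_unitaryGroup d hdunit b)
      rw [star_eq_conjTranspose] at hU
      rw [star_mulVec, dotProduct_mulVec, vecMul_vecMul, hU, vecMul_one, hψ]
    · obtain ⟨j, hj⟩ := Function.ne_iff.mp hbb
      exact dotProduct_eq_zero_of_sign_ne (s j) (hsherm j) _ _ (b j) (b' j) hj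
        (mulVec_prod_eq s d ψ hstab hanti hcommds b j)
        (mulVec_prod_eq s d ψ hstab hanti hcommds b' j)
  exact ⟨horth, span_eq_top_of_orthonormal (by simp) _ horth⟩
end

section
/- Let s₁,…,sₙ, d₁,…,dₙ be elements of the n-qubit Pauli group Gₙ such that the sᵢ pairwise commute, the dᵢ pairwise commute, dᵢsᵢ = −sᵢdᵢ for each i, dᵢsⱼ = sⱼdᵢ for j ≠ i, and dᵢdⱼ, sᵢsⱼ commute for all i, j (a full stabilizer tableau). Then every element Q ∈ Gₙ admits a unique decomposition Q = i^k (∏ᵢ dᵢ^{bᵢ}) (∏ᵢ sᵢ^{cᵢ}) with k ∈ {0,1,2,3} and b, c ∈ {0,1}ⁿ (products in order of increasing i). -/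
/-!
The `4 · 2ⁿ · 2ⁿ` products `i^k (∏ dᵢ^{bᵢ}) (∏ sᵢ^{cᵢ})` all lie in `G_n`, because `G_n` is closed
under multiplication, and `G_n` has at most `4 · 4ⁿ` elements, one for each pair (phase, Pauli
string). Hence it suffices to show that the products are pairwise distinct; existence then follows
by counting.

For distinctness, let `W` be such a product. Then `s_j W = (-1)^{b_j} W s_j` and
`d_j W = (-1)^{c_j} W d_j` (`mul_prod_select_comm`). Since `W`, `s_j` and `d_j` are invertible, these
relations recover `b` and `c` from `W`, after which `k` is determined because the powers
`1, i, i², i³` are distinct.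
-/

open Matrix

/-- The single-qubit Pauli matrices `I, X, Y, Z`. -/
def pauliMat : Fin 4 → Matrix (Fin 2) (Fin 2) ℂ
  | 0 => !![1, 0; 0, 1]
  | 1 => !![0, 1; 1, 0]
  | 2 => !![0, -Complex.I; Complex.I, 0]
  | 3 => !![1, 0; 0, -1]

/-- The unphased `n`-qubit Pauli string `σ_{a 1} ⊗ ⋯ ⊗ σ_{a n}`, realized as a matrix
acting on `ℂ^{2^n}` with index set `Fin n → Fin 2` (the `n`-fold Kronecker product,
written entrywise). -/
def pauliString {n : ℕ} (a : Fin n → Fin 4) :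
    Matrix (Fin n → Fin 2) (Fin n → Fin 2) ℂ :=
  fun x y => ∏ i, pauliMat (a i) (x i) (y i)

/-- The `n`-qubit Pauli group `G_n`: all matrices `i^k P` with `k ∈ {0,1,2,3}` and `P`
an unphased Pauli string. -/
def PauliGroup (n : ℕ) : Set (Matrix (Fin n → Fin 2) (Fin n → Fin 2) ℂ) :=
  {Q | ∃ (k : Fin 4) (a : Fin n → Fin 4), Q = Complex.I ^ (k : ℕ) • pauliString a}

lemma pauliMat_mul_self (a : Fin 4) : pauliMat a * pauliMat a = 1 := by
  fin_cases a <;> ext x y <;> fin_cases x <;> fin_cases y <;>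
    simp [pauliMat, Matrix.mul_apply]

lemma pauliMat_mul (a b : Fin 4) : ∃ (k : ℕ) (c : Fin 4),
    pauliMat a * pauliMat b = Complex.I ^ k • pauliMat c := by
  -- The phase and the label of each entry of the single-qubit multiplication table.
  refine ⟨!![0, 0, 0, 0; 0, 0, 1, 3; 0, 3, 0, 1; 0, 1, 3, 0] a b,
    !![0, 1, 2, 3; 1, 0, 3, 2; 2, 3, 0, 1; 3, 2, 1, 0] a b, ?_⟩
  fin_cases a <;> fin_cases b <;> ext x y <;> fin_cases x <;> fin_cases y <;>
    simp [pauliMat, Matrix.mul_apply, Complex.I_pow_three]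

/-- Products of Kronecker products are computed factor by factor. -/
lemma pauliString_mul_apply {n : ℕ} (a b : Fin n → Fin 4) (x y : Fin n → Fin 2) :
    (pauliString a * pauliString b) x y = ∏ i, (pauliMat (a i) * pauliMat (b i)) (x i) (y i) := by
  simp only [Matrix.mul_apply, pauliString, ← Finset.prod_mul_distrib]
  rw [Finset.prod_univ_sum, Fintype.piFinset_univ]

lemma pauliString_mul_self {n : ℕ} (a : Fin n → Fin 4) :
    pauliString a * pauliString a = 1 := by
  ext x y
  simp only [pauliString_mul_apply, pauliMat_mul_self, Matrix.one_apply, Finset.prod_boole,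
    funext_iff, Finset.mem_univ, forall_true_left]

lemma smul_pauliString_mem {n : ℕ} (k : ℕ) (a : Fin n → Fin 4) :
    Complex.I ^ k • pauliString a ∈ PauliGroup n :=
  ⟨⟨k % 4, Nat.mod_lt _ (by norm_num)⟩, a, by
    rw [Complex.I_pow_eq_pow_mod k]⟩

lemma pauliString_mul {n : ℕ} (a b : Fin n → Fin 4) : ∃ (k : ℕ) (c : Fin n → Fin 4),
    pauliString a * pauliString b = Complex.I ^ k • pauliString c := by
  choose k c h using fun i => pauliMat_mul (a i) (b i)
  refine ⟨∑ i, k i, c, ?_⟩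
  ext x y
  simp only [pauliString_mul_apply, h, Matrix.smul_apply, smul_eq_mul, Finset.prod_mul_distrib,
    Finset.prod_pow_eq_pow_sum, pauliString]

/-- The Pauli group as a submonoid of the matrix monoid. -/
def pauliSubmonoid (n : ℕ) : Submonoid (Matrix (Fin n → Fin 2) (Fin n → Fin 2) ℂ) where
  carrier := PauliGroup n
  one_mem' := by
    refine ⟨0, fun _ => 0, ?_⟩
    ext x y
    have h : pauliMat 0 = 1 := Matrix.one_fin_two.symm
    simp [pauliString, h, Matrix.one_apply, Finset.prod_boole, funext_iff]
  mul_mem' := by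
    rintro _ _ ⟨k, a, rfl⟩ ⟨l, b, rfl⟩
    obtain ⟨m, c, h⟩ := pauliString_mul a b
    rw [smul_mul_smul_comm, h, smul_smul, ← pow_add, ← pow_add]
    exact smul_pauliString_mem _ _

lemma I_smul_mem {n : ℕ} (k : ℕ) {Q : Matrix (Fin n → Fin 2) (Fin n → Fin 2) ℂ}
    (hQ : Q ∈ PauliGroup n) : Complex.I ^ k • Q ∈ PauliGroup n := by
  obtain ⟨l, a, rfl⟩ := hQ
  rw [smul_smul, ← pow_add]
  exact smul_pauliString_mem _ _

lemma isUnit_of_mem {n : ℕ} {Q : Matrix (Fin n → Fin 2) (Fin n → Fin 2) ℂ}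
    (hQ : Q ∈ PauliGroup n) : IsUnit Q := by
  obtain ⟨k, a, rfl⟩ := hQ
  have h : IsUnit (pauliString a) := IsUnit.of_mul_eq_one _ (pauliString_mul_self a)
  exact h.smul (Units.mk0 (Complex.I ^ (k : ℕ)) (pow_ne_zero _ Complex.I_ne_zero))

lemma I_pow_fin_injective : Function.Injective fun k : Fin 4 => Complex.I ^ (k : ℕ) := by
  intro k l h
  fin_cases k <;> fin_cases l <;> simp [Complex.ext_iff, Complex.I_pow_three] at h ⊢ <;>
    norm_num at h

/-- If `M` commutes with each `f i` up to a scalar `ε i`, then it commutes with the ordered product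
of the `f i` up to the product of these scalars. -/
lemma mul_prod_ofFn_comm {A : Type*} [Ring A] [Algebra ℂ A] {n : ℕ} (M : A) (f : Fin n → A)
    (ε : Fin n → ℂ) (h : ∀ i, M * f i = ε i • (f i * M)) :
    M * (List.ofFn f).prod = (∏ i, ε i) • ((List.ofFn f).prod * M) := by
  induction n with
  | zero => simp
  | succ n ih =>
    rw [List.ofFn_succ, List.prod_cons, Fin.prod_univ_succ, ← mul_assoc, h 0, smul_mul_assoc,
      mul_assoc, ih (fun i => f i.succ) (fun i => ε i.succ) fun i => h i.succ, mul_smul_comm,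
      smul_smul, mul_assoc]

/-- An element `M` that anticommutes with `f j` and commutes with every other `f i` commutes with
the subproduct selected by `b` up to the sign `(-1)^{b j}`. -/
lemma mul_prod_select_comm {A : Type*} [Ring A] [Algebra ℂ A] {n : ℕ} (M : A) (f : Fin n → A)
    (j : Fin n) (hj : M * f j = -(f j * M)) (hne : ∀ i, i ≠ j → M * f i = f i * M)
    (b : Fin n → Bool) :
    M * (List.ofFn fun i => if b i then f i else 1).prod =
      (if b j then (-1 : ℂ) else 1) • ((List.ofFn fun i => if b i then f i else 1).prod * M) := by
  rw [mul_prod_ofFn_comm M _ (fun i => if i = j then (if b j then (-1 : ℂ) else 1) else 1)]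
  · simp
  · intro i
    by_cases hij : i = j
    · subst hij
      cases b i <;> simp [hj]
    · cases b i <;> simp [hij, hne i hij]

lemma mul_prod_select_of_commute {A : Type*} [Ring A] {n : ℕ} (M : A) (f : Fin n → A)
    (h : ∀ i, M * f i = f i * M) (b : Fin n → Bool) :
    M * (List.ofFn fun i => if b i then f i else 1).prod =
      (List.ofFn fun i => if b i then f i else 1).prod * M := by
  refine Commute.list_prod_right _ _ fun x hx => ?_
  obtain ⟨i, rfl⟩ := (List.mem_ofFn' _ _).1 hx
  beta_reduce
  split_ifs
  · exact h i
  · exact Commute.one_right M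

/-- The sign relating `M * W` and `W * M`, for invertible `M` and `W`, determines the bit. -/
lemma bit_eq_of_sign {A : Type*} [Ring A] [Nontrivial A] [Algebra ℂ A] {M W : A} (hM : IsUnit M)
    (hW : IsUnit W) {p q : Bool} (hp : M * W = (if p then (-1 : ℂ) else 1) • (W * M))
    (hq : M * W = (if q then (-1 : ℂ) else 1) • (W * M)) : p = q := by
  have h := smul_left_injective ℂ (hW.mul hM).ne_zero (hp.symm.trans hq)
  cases p <;> cases q <;> first | rfl | norm_num at h

/-- Given a full stabilizer tableau `(s, d)` in the Pauli group (pairwise commuting `s i`,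
pairwise commuting `d i`, `d i` anticommuting with `s i` and commuting with `s j` for
`j ≠ i`), every `Q ∈ G_n` admits a unique decomposition
`Q = i^k (∏ i, d i ^ (b i)) (∏ i, s i ^ (c i))` with `k ∈ {0,1,2,3}`, `b c ∈ {0,1}^n`
(products in order of increasing `i`). -/
theorem stmt4 {n : ℕ} (s d : Fin n → Matrix (Fin n → Fin 2) (Fin n → Fin 2) ℂ)
    (hsG : ∀ i, s i ∈ PauliGroup n) (hdG : ∀ i, d i ∈ PauliGroup n)
    (hs : ∀ i j, s i * s j = s j * s i)
    (hd : ∀ i j, d i * d j = d j * d i)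
    (hanti : ∀ i, d i * s i = -(s i * d i))
    (hcomm : ∀ i j, i ≠ j → d i * s j = s j * d i) :
    ∀ Q ∈ PauliGroup n,
      ∃! t : Fin 4 × (Fin n → Bool) × (Fin n → Bool),
        Q = Complex.I ^ ((t.1 : ℕ)) •
          ((List.ofFn (fun i => if t.2.1 i then d i else 1)).prod *
            (List.ofFn (fun i => if t.2.2 i then s i else 1)).prod) := by
  classical
  set F : Fin 4 × (Fin n → Bool) × (Fin n → Bool) → Matrix (Fin n → Fin 2) (Fin n → Fin 2) ℂ :=
    fun t => Complex.I ^ ((t.1 : ℕ)) •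
      ((List.ofFn (fun i => if t.2.1 i then d i else 1)).prod *
        (List.ofFn (fun i => if t.2.2 i then s i else 1)).prod) with hF
  have hsel : ∀ f : Fin n → Matrix (Fin n → Fin 2) (Fin n → Fin 2) ℂ,
      (∀ i, f i ∈ PauliGroup n) → ∀ b : Fin n → Bool,
      (List.ofFn (fun i => if b i then f i else 1)).prod ∈ pauliSubmonoid n := by
    intro f hf b
    refine Submonoid.list_prod_mem _ fun x hx => ?_
    obtain ⟨i, rfl⟩ := (List.mem_ofFn' _ _).1 hx
    beta_reduce
    split_ifs
    · exact hf i
    · exact (pauliSubmonoid n).one_mem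
  have hprod : ∀ b c : Fin n → Bool,
      (List.ofFn (fun i => if b i then d i else 1)).prod *
        (List.ofFn (fun i => if c i then s i else 1)).prod ∈ PauliGroup n := fun b c =>
    (pauliSubmonoid n).mul_mem (hsel d hdG b) (hsel s hsG c)
  have hmem : ∀ t, F t ∈ PauliGroup n := fun t => I_smul_mem _ (hprod _ _)
  have hsF : ∀ t j, s j * F t = (if t.2.1 j then (-1 : ℂ) else 1) • (F t * s j) := by
    intro t j
    simp only [hF]
    rw [mul_smul_comm, ← mul_assoc,
      mul_prod_select_comm (s j) d j (by rw [hanti, neg_neg])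
        (fun i hi => (hcomm i j hi).symm) t.2.1,
      smul_mul_assoc, mul_assoc, mul_prod_select_of_commute (s j) s (hs j) t.2.2,
      smul_mul_assoc, mul_assoc, smul_comm]
  have hdF : ∀ t j, d j * F t = (if t.2.2 j then (-1 : ℂ) else 1) • (F t * d j) := by
    intro t j
    simp only [hF]
    rw [mul_smul_comm, ← mul_assoc, mul_prod_select_of_commute (d j) d (hd j) t.2.1, mul_assoc,
      mul_prod_select_comm (d j) s j (hanti j) (fun i hi => hcomm j i hi.symm) t.2.2,
      mul_smul_comm, smul_mul_assoc, mul_assoc, smul_comm]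
  have hinj : Function.Injective F := by
    rintro ⟨k, b, c⟩ ⟨k', b', c'⟩ h
    obtain rfl : b = b' := funext fun j =>
      bit_eq_of_sign (isUnit_of_mem (hsG j)) (isUnit_of_mem (hmem _)) (hsF (k, b, c) j)
        (by rw [h]; exact hsF (k', b', c') j)
    obtain rfl : c = c' := funext fun j =>
      bit_eq_of_sign (isUnit_of_mem (hdG j)) (isUnit_of_mem (hmem _)) (hdF (k, b, c) j)
        (by rw [h]; exact hdF (k', b, c') j)
    obtain rfl : k = k' := I_pow_fin_injective
      (smul_left_injective ℂ (isUnit_of_mem (hprod b c)).ne_zero h)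
    rfl
  -- The image of `F` lies in `G_n` and has at least as many elements, so it is all of `G_n`.
  set G : Finset (Matrix (Fin n → Fin 2) (Fin n → Fin 2) ℂ) :=
    Finset.univ.image fun p : Fin 4 × (Fin n → Fin 4) =>
      Complex.I ^ (p.1 : ℕ) • pauliString p.2 with hG
  have hGmem : ∀ Q, Q ∈ PauliGroup n → Q ∈ G := by
    rintro _ ⟨k, a, rfl⟩
    exact Finset.mem_image_of_mem _ (Finset.mem_univ (k, a))
  have himage : Finset.univ.image F = G := by
    refine Finset.eq_of_subset_of_card_le ?_ ?_
    · intro Q hQ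
      obtain ⟨t, -, rfl⟩ := Finset.mem_image.1 hQ
      exact hGmem _ (hmem t)
    · rw [Finset.card_image_of_injective _ hinj]
      refine Finset.card_image_le.trans (le_of_eq ?_)
      simp [← mul_pow]
  intro Q hQ
  obtain ⟨t, -, rfl⟩ := Finset.mem_image.1 (himage ▸ hGmem Q hQ)
  exact ⟨t, rfl, fun t' ht' => (hinj ht').symm⟩
end
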